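/- arXiv:1106.5573 — 2 statements merged into one kernel-verified Lean document; each statement's English description precedes it below -/
import Mathlib

section
/- Let n ≥ 1, let A be a nonempty connected Hausdorff topological space, and let π : A → ℝⁿ be a local homeomorphism such that for every closed ball B̄ ⊆ ℝⁿ and every connected component C of π⁻¹(B̄) one has π(C) = B̄. Then π is a homeomorphism from A onto ℝⁿ; in particular π admits a continuous global section γ : ℝⁿ → A with π ∘ γ = id. -/
noncomputable section

open scoped BigOperators

def eps {b : ℕ} (i : Fin b) : ℝ := if (i : ℕ) < 3 then 1 else -1

def bR {b : ℕ} (v w : Fin b → ℝ) : ℝ := ∑ i, eps i * v i * w i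

def qR {b : ℕ} (v : Fin b → ℝ) : ℝ := bR v v

def bC {b : ℕ} (z w : Fin b → ℂ) : ℂ := ∑ i, (eps i : ℂ) * z i * w i

def qC {b : ℕ} (z : Fin b → ℂ) : ℂ := bC z z

def conjVec {b : ℕ} (z : Fin b → ℂ) : Fin b → ℂ := fun i => (starRingEnd ℂ) (z i)

def rePart {b : ℕ} (z : Fin b → ℂ) : Fin b → ℝ := fun i => (z i).re
def imPart {b : ℕ} (z : Fin b → ℂ) : Fin b → ℝ := fun i => (z i).im

def cplx {b : ℕ} (v : Fin b → ℝ) : Fin b → ℂ := fun i => (v i : ℂ)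

def isPeriodVec {b : ℕ} (z : Fin b → ℂ) : Prop :=
  qC z = 0 ∧ 0 < (bC z (conjVec z)).re

instance projectivizationTopology (K V : Type*) [DivisionRing K] [AddCommGroup V] [Module K V]
    [TopologicalSpace V] : TopologicalSpace (Projectivization K V) :=
  inferInstanceAs (TopologicalSpace (Quotient (projectivizationSetoid K V)))

def periodDomain (b : ℕ) : Set (Projectivization ℂ (Fin b → ℂ)) :=
  {x | ∃ (z : Fin b → ℂ) (hz : z ≠ 0), Projectivization.mk ℂ z hz = x ∧ isPeriodVec z}

def Pspan {b : ℕ} (z : Fin b → ℂ) : Submodule ℝ (Fin b → ℝ) :=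
  Submodule.span ℝ {rePart z, imPart z}

def PosDefOn {b : ℕ} (W : Submodule ℝ (Fin b → ℝ)) : Prop :=
  ∀ v ∈ W, v ≠ 0 → 0 < qR v

def twistorLine {b : ℕ} (W : Submodule ℝ (Fin b → ℝ)) :
    Set (Projectivization ℂ (Fin b → ℂ)) :=
  {x | ∃ (z : Fin b → ℂ) (hz : z ≠ 0), Projectivization.mk ℂ z hz = x ∧ isPeriodVec z ∧
    rePart z ∈ W ∧ imPart z ∈ W}

/-- `W^⊥ ∩ Λ = {0}`: the twistor line / three-space `W` is generic w.r.t. `Λ`. -/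
def IsGenericW {b : ℕ} (Λ : AddSubgroup (Fin b → ℝ)) (W : Submodule ℝ (Fin b → ℝ)) : Prop :=
  ∀ α ∈ Λ, (∀ w ∈ W, bR α w = 0) → α = 0

def bRlin {b : ℕ} (p : Fin b → ℝ) : (Fin b → ℝ) →ₗ[ℝ] ℝ where
  toFun v := bR v p
  map_add' x y := by
    unfold bR
    rw [← Finset.sum_add_distrib]
    exact Finset.sum_congr rfl fun i _ => by simp [Pi.add_apply]; ring
  map_smul' c x := by
    show bR (c • x) p = (RingHom.id ℝ) c • bR x p
    unfold bR
    rw [RingHom.id_apply, smul_eq_mul, Finset.mul_sum]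
    exact Finset.sum_congr rfl fun i _ => by simp [Pi.smul_apply]; ring

def perpSubmodule {b : ℕ} (P : Submodule ℝ (Fin b → ℝ)) : Submodule ℝ (Fin b → ℝ) :=
  ⨅ p ∈ P, LinearMap.ker (bRlin p)

open Set Metric Topology in
theorem aux_section_cont {A X : Type*} [TopologicalSpace A] [TopologicalSpace X] {f : A → X}
    (hf : IsOpenMap f) {C : Set A} {B : Set X} (hinj : InjOn f C)
    (hC : ∀ y ∈ C, ∃ N ∈ 𝓝 y, N ∩ f ⁻¹' B ⊆ C) {g : X → A}
    (hg : ∀ x ∈ B, g x ∈ C ∧ f (g x) = x) : ContinuousOn g B := by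
  intro x hx
  rw [ContinuousWithinAt, Filter.tendsto_def]
  intro W hW
  obtain ⟨hgx, hfx⟩ := hg x hx
  obtain ⟨N, hN, hNC⟩ := hC _ hgx
  have h1 : f '' (W ∩ N) ∈ 𝓝 x := by
    have := hf.image_mem_nhds (Filter.inter_mem hW hN)
    rwa [hfx] at this
  filter_upwards [mem_nhdsWithin_of_mem_nhds h1, self_mem_nhdsWithin] with x' hx' hB
  obtain ⟨w, ⟨hwW, hwN⟩, rfl⟩ := hx'
  have hw : w ∈ C := hNC ⟨hwN, hB⟩
  obtain ⟨h2, h3⟩ := hg _ hB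
  have : g (f w) = w := hinj h2 hw h3
  change g (f w) ∈ W
  rwa [this]

open Set Metric Topology in
theorem aux_unique {A X : Type*} [TopologicalSpace A] [T2Space A] [TopologicalSpace X] {f : A → X}
    (hf : IsLocalHomeomorph f) {U V : Set A} {S : Set X} (hU : IsOpen U) (hV : IsOpen V)
    (iU : InjOn f U) (iV : InjOn f V) (sU : S ⊆ f '' U) (sV : S ⊆ f '' V)
    (hS : IsPreconnected S) {a : A} (aU : a ∈ U) (aV : a ∈ V) (aS : f a ∈ S) :
    U ∩ f ⁻¹' S ⊆ V := by
  classical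
  have : Nonempty A := ⟨a⟩
  have key : ∀ W : Set A, IsOpen W → InjOn f W → S ⊆ f '' W →
      ∃ g : X → A, ContinuousOn g S ∧ ∀ x ∈ S, g x ∈ W ∧ f (g x) = x := by
    intro W hW iW sW
    have : ∀ x, ∃ w, x ∈ S → w ∈ W ∧ f w = x := by
      intro x
      by_cases hx : x ∈ S
      · obtain ⟨w, hw⟩ := sW hx
        exact ⟨w, fun _ => hw⟩
      · exact ⟨a, fun h => absurd h hx⟩
    choose g hg using this
    exact ⟨g, aux_section_cont hf.isOpenMap iW
      (fun y hy => ⟨W, hW.mem_nhds hy, inter_subset_left⟩) hg, hg⟩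
  obtain ⟨g, cg, hg⟩ := key U hU iU sU
  obtain ⟨g', cg', hg'⟩ := key V hV iV sV
  have heq : S.EqOn g g' := by
    refine (T2Space.isSeparatedMap f).eqOn_of_comp_eqOn hf.isLocallyInjective hS cg cg' ?_ aS ?_
    · intro x hx
      simp [(hg x hx).2, (hg' x hx).2]
    · rw [iU (hg _ aS).1 aU (hg _ aS).2, iV (hg' _ aS).1 aV (hg' _ aS).2]
  rintro u ⟨hu, huS⟩
  have h1 : g (f u) = u := iU (hg _ huS).1 hu (hg _ huS).2
  rw [← h1, heq huS]
  exact (hg' _ huS).1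

open Set Metric Topology in
theorem aux_extend {A E : Type*} [TopologicalSpace A] [T2Space A] [NormedAddCommGroup E]
    [NormedSpace ℝ E] [ProperSpace E] {f : A → E}
    (hf : IsLocalHomeomorph f) {a : A} {t : ℝ} (ht : 0 < t)
    (h : f '' connectedComponentIn (f ⁻¹' closedBall (f a) t) a = closedBall (f a) t)
    {U : Set A} (hU : IsOpen U) (aU : a ∈ U) (iU : InjOn f U) (sU : f '' U = ball (f a) t) :
    ∃ s, t < s ∧ ∃ V : Set A, IsOpen V ∧ a ∈ V ∧ InjOn f V ∧ f '' V = ball (f a) s := by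
  classical
  set p := f a with hp
  have hcl : closure (ball p t) = closedBall p t := closure_ball p ht.ne'
  have hUB : U ⊆ f ⁻¹' ball p t := by
    intro u hu
    change f u ∈ ball p t
    rw [← sU]; exact mem_image_of_mem f hu
  have hCB : closure U ⊆ f ⁻¹' closedBall p t := by
    refine closure_minimal (hUB.trans (preimage_mono ball_subset_closedBall)) ?_
    exact isClosed_closedBall.preimage hf.continuous
  -- local structure of the closure
  have hN : ∀ y ∈ closure U, ∃ N : Set A, IsOpen N ∧ y ∈ N ∧ N ∩ f ⁻¹' ball p t ⊆ U := by
    intro y hy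
    obtain ⟨e, hye, rfl⟩ := hf y
    obtain ⟨ε, hε, hball⟩ := Metric.isOpen_iff.1 e.open_target (e y) (e.map_source hye)
    have hNo : IsOpen (e.source ∩ e ⁻¹' ball (e y) ε) := e.isOpen_inter_preimage isOpen_ball
    refine ⟨e.source ∩ e ⁻¹' ball (e y) ε, hNo, ⟨hye, mem_ball_self hε⟩, ?_⟩
    obtain ⟨u, huN, huU⟩ := mem_closure_iff.1 hy _ hNo ⟨hye, mem_ball_self hε⟩
    have := aux_unique (S := ball (e y) ε ∩ ball p t) hf hNo hU
      (e.injOn.mono inter_subset_left) iU ?_ ?_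
      ((convex_ball _ _).inter (convex_ball _ _)).isPreconnected huN huU ⟨huN.2, hUB huU⟩
    · rintro z ⟨hz, hz'⟩
      exact this ⟨hz, hz.2, hz'⟩
    · rintro x ⟨hx, -⟩
      refine ⟨e.symm x, ⟨e.map_target (hball hx), ?_⟩, e.right_inv (hball hx)⟩
      simpa [e.right_inv (hball hx)] using hx
    · rw [sU]; exact inter_subset_right
  have hN' : ∀ y ∈ closure U, ∃ N : Set A, IsOpen N ∧ y ∈ N ∧ N ∩ f ⁻¹' ball p t ⊆ U ∧
      N ∩ f ⁻¹' closedBall p t ⊆ closure U := by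
    intro y hy
    obtain ⟨N, h1, h2, h3⟩ := hN y hy
    refine ⟨N, h1, h2, h3, ?_⟩
    rw [← hcl]
    refine (inter_subset_inter_right N
      hf.isOpenMap.preimage_closure_subset_closure_preimage).trans ?_
    exact h1.inter_closure.trans (closure_mono h3)
  choose! N No Ny NU NC using hN'
  have hinj : InjOn f (closure U) := by
    intro y hy y' hy' hyy
    by_contra hne
    obtain ⟨W, W', hW, hW', hyW, hyW', hd⟩ := t2_separation hne
    have h1 : f '' (N y ∩ W) ∈ 𝓝 (f y) :=
      hf.isOpenMap.image_mem_nhds (((No y hy).inter hW).mem_nhds ⟨Ny y hy, hyW⟩)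
    have h2 : f '' (N y' ∩ W') ∈ 𝓝 (f y) := by
      rw [hyy]
      exact hf.isOpenMap.image_mem_nhds (((No y' hy').inter hW').mem_nhds ⟨Ny y' hy', hyW'⟩)
    have h3 : f y ∈ closure (ball p t) := by rw [hcl]; exact hCB hy
    obtain ⟨x, ⟨⟨z, hz, hzx⟩, ⟨z', hz', hzx'⟩⟩, hx⟩ :=
      mem_closure_iff_nhds.1 h3 _ (Filter.inter_mem h1 h2)
    have hzU : z ∈ U := NU y hy ⟨hz.1, by rw [mem_preimage, hzx]; exact hx⟩
    have hzU' : z' ∈ U := NU y' hy' ⟨hz'.1, by rw [mem_preimage, hzx']; exact hx⟩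
    have : z = z' := iU hzU hzU' (hzx.trans hzx'.symm)
    subst this
    exact disjoint_left.1 hd hz.2 hz'.2
  have aF : a ∈ f ⁻¹' closedBall p t := mem_closedBall_self ht.le
  have hcomp : connectedComponentIn (f ⁻¹' closedBall p t) a ⊆ closure U := by
    intro z hz
    by_contra hzC
    have hpre : IsPreconnected (connectedComponentIn (f ⁻¹' closedBall p t) a) :=
      isPreconnected_connectedComponentIn
    have hsub := connectedComponentIn_subset (f ⁻¹' closedBall p t) a
    obtain ⟨w, hw, hwO, hwC⟩ := hpre (⋃ y ∈ closure U, N y) (closure U)ᶜ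
      (isOpen_biUnion fun y hy => No y hy) isClosed_closure.isOpen_compl
      (by
        intro w _
        by_cases hwC : w ∈ closure U
        · exact Or.inl (mem_biUnion hwC (Ny w hwC))
        · exact Or.inr hwC)
      ⟨a, mem_connectedComponentIn aF, mem_biUnion (subset_closure aU) (Ny a (subset_closure aU))⟩
      ⟨z, hz, hzC⟩
    obtain ⟨y, hy, hwy⟩ := mem_iUnion₂.1 hwO
    exact hwC (NC y hy ⟨hwy, hsub hw⟩)
  have himg : closedBall p t ⊆ f '' closure U := by
    rw [← h]; exact image_mono hcomp
  have : ∀ x, ∃ w, x ∈ closedBall p t → w ∈ closure U ∧ f w = x := by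
    intro x
    by_cases hx : x ∈ closedBall p t
    · obtain ⟨w, hw⟩ := himg hx
      exact ⟨w, fun _ => hw⟩
    · exact ⟨a, fun h => absurd h hx⟩
  choose g hg using this
  have cg : ContinuousOn g (closedBall p t) := aux_section_cont hf.isOpenMap hinj
    (fun y hy => ⟨N y, (No y hy).mem_nhds (Ny y hy), NC y hy⟩) hg
  have hgim : g '' closedBall p t = closure U := by
    apply Subset.antisymm
    · rintro _ ⟨x, hx, rfl⟩
      exact (hg x hx).1
    · intro y hy
      have := hg (f y) (hCB hy)
      exact ⟨f y, hCB hy, hinj this.1 hy this.2⟩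
  have hK : IsCompact (closure U) := hgim ▸ (isCompact_closedBall p t).image_of_continuousOn cg
  obtain ⟨W, hWo, hUW, hWi⟩ := hinj.exists_isOpen_superset hK
    (fun x _ => hf.continuous.continuousAt) (fun x _ => by
      obtain ⟨e, hxe, rfl⟩ := hf x
      exact ⟨e.source, e.open_source.mem_nhds hxe, e.injOn⟩)
  obtain ⟨δ, hδ, hδW⟩ := (isCompact_closedBall p t).exists_thickening_subset_open
    (hf.isOpenMap W hWo) (himg.trans (image_mono hUW))
  rw [thickening_closedBall hδ ht.le] at hδW
  refine ⟨δ + t, by linarith, W ∩ f ⁻¹' ball p (δ + t),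
    hWo.inter (isOpen_ball.preimage hf.continuous),
    ⟨hUW (subset_closure aU), mem_ball_self (by linarith)⟩, hWi.mono inter_subset_left, ?_⟩
  rw [image_inter_preimage]
  exact inter_eq_right.2 hδW

open Set Metric Topology in
theorem aux_main {A E : Type*} [TopologicalSpace A] [T2Space A] [ConnectedSpace A]
    [NormedAddCommGroup E] [NormedSpace ℝ E] [ProperSpace E] {f : A → E}
    (hf : IsLocalHomeomorph f) (a : A)
    (h : ∀ t : ℝ, 0 < t →
      f '' connectedComponentIn (f ⁻¹' closedBall (f a) t) a = closedBall (f a) t) :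
    Function.Bijective f := by
  let P : ℝ → Set A → Prop := fun r U =>
    0 < r ∧ IsOpen U ∧ a ∈ U ∧ InjOn f U ∧ f '' U = ball (f a) r
  have nest : ∀ r s U V, P r U → P s V → r ≤ s → U ⊆ V := by
    rintro r s U V ⟨hr, hU, aU, iU, sU⟩ ⟨hs, hV, aV, iV, sV⟩ hrs
    have := aux_unique (S := ball (f a) r) hf hU hV iU iV sU.ge
      (by rw [sV]; exact ball_subset_ball hrs) (convex_ball _ _).isPreconnected aU aV
      (mem_ball_self hr)
    intro u hu
    exact this ⟨hu, by rw [mem_preimage, ← sU]; exact mem_image_of_mem f hu⟩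
  obtain ⟨r₀, U₀, h₀⟩ : ∃ r U, P r U := by
    obtain ⟨e, hae, rfl⟩ := hf a
    obtain ⟨ε, hε, hball⟩ := Metric.isOpen_iff.1 e.open_target (e a) (e.map_source hae)
    refine ⟨ε, e.source ∩ e ⁻¹' ball (e a) ε, hε, e.isOpen_inter_preimage isOpen_ball,
      ⟨hae, mem_ball_self hε⟩, e.injOn.mono inter_subset_left, ?_⟩
    rw [image_inter_preimage, e.image_source_eq_target]
    exact inter_eq_right.2 hball
  let V : Set A := ⋃₀ {U | ∃ r, P r U}
  have Vo : IsOpen V := isOpen_sUnion (by rintro U ⟨r, hU⟩; exact hU.2.1)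
  have aV : a ∈ V := ⟨U₀, ⟨r₀, h₀⟩, h₀.2.2.1⟩
  have Vi : InjOn f V := by
    rintro x ⟨U, ⟨r, hU⟩, hx⟩ y ⟨U', ⟨r', hU'⟩, hy⟩ hxy
    rcases le_total r r' with hr | hr
    · exact hU'.2.2.2.1 (nest _ _ _ _ hU hU' hr hx) hy hxy
    · exact hU.2.2.2.1 hx (nest _ _ _ _ hU' hU hr hy) hxy
  have hunb : ¬ BddAbove {r | ∃ U, P r U} := by
    intro hb
    set t := sSup {r | ∃ U, P r U} with htdef
    have hle : ∀ r U, P r U → r ≤ t := fun r U hU => le_csSup hb ⟨U, hU⟩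
    have ht : 0 < t := h₀.1.trans_le (hle _ _ h₀)
    have Vs : f '' V = ball (f a) t := by
      apply Subset.antisymm
      · rintro _ ⟨x, ⟨U, ⟨r, hU⟩, hx⟩, rfl⟩
        exact ball_subset_ball (hle _ _ hU) (hU.2.2.2.2 ▸ mem_image_of_mem f hx)
      · intro x hx
        obtain ⟨r, ⟨U, hU⟩, hr⟩ :=
          exists_lt_of_lt_csSup (s := {r | ∃ U, P r U}) ⟨r₀, U₀, h₀⟩ (mem_ball.1 hx)
        have : x ∈ f '' U := by rw [hU.2.2.2.2]; exact hr
        obtain ⟨u, hu, rfl⟩ := this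
        exact ⟨u, ⟨U, ⟨r, hU⟩, hu⟩, rfl⟩
    obtain ⟨s, hs, W, hW⟩ := aux_extend hf ht (h t ht) Vo aV Vi Vs
    exact absurd (hle s W ⟨ht.trans hs, hW⟩) (not_le.2 hs)
  have Vs : ∀ x, ∃ u ∈ V, f u = x := by
    intro x
    obtain ⟨r, ⟨U, hU⟩, hr⟩ := not_bddAbove_iff.1 hunb (dist x (f a))
    have : x ∈ f '' U := by rw [hU.2.2.2.2]; exact hr
    obtain ⟨u, hu, rfl⟩ := this
    exact ⟨u, ⟨U, ⟨r, hU⟩, hu⟩, rfl⟩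
  choose g hgV hg using Vs
  have cg : Continuous g := by
    rw [← continuousOn_univ]
    exact aux_section_cont hf.isOpenMap Vi
      (fun y hy => ⟨V, Vo.mem_nhds hy, inter_subset_left⟩) (fun x _ => ⟨hgV x, hg x⟩)
  have hV : V = {z | g (f z) = z} := by
    ext z
    constructor
    · intro hz
      exact Vi (hgV _) hz (hg _)
    · intro hz
      rw [← show g (f z) = z from hz]
      exact hgV _
  have Vc : IsClosed V := by
    rw [hV]; exact isClosed_eq (cg.comp hf.continuous) continuous_id
  have Vu : V = univ := IsClopen.eq_univ ⟨Vc, Vo⟩ ⟨a, aV⟩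
  rw [Vu, injOn_univ] at Vi
  exact ⟨Vi, fun x => ⟨g x, hg x⟩⟩

/-- with `A` moreover nonempty and connected, such a map is a homeomorphism
onto `ℝⁿ`; in particular it admits a continuous global section. -/
theorem stmt13 (n : ℕ) (hn : 1 ≤ n) (A : Type*) [TopologicalSpace A] [T2Space A]
    [Nonempty A] [ConnectedSpace A]
    (f : A → EuclideanSpace ℝ (Fin n)) (hf : IsLocalHomeomorph f)
    (h : ∀ (c : EuclideanSpace ℝ (Fin n)) (r : ℝ), 0 ≤ r →
      ∀ a ∈ f ⁻¹' Metric.closedBall c r,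
        f '' connectedComponentIn (f ⁻¹' Metric.closedBall c r) a = Metric.closedBall c r) :
    IsHomeomorph f ∧
    ∃ γ : EuclideanSpace ℝ (Fin n) → A, Continuous γ ∧ f ∘ γ = id := by
  obtain ⟨a⟩ := ‹Nonempty A›
  have hb : Function.Bijective f := aux_main hf a fun t ht =>
    h (f a) t ht.le a (Metric.mem_closedBall_self ht.le)
  have hh : IsHomeomorph f := ⟨hf.continuous, hf.isOpenMap, hb⟩
  refine ⟨hh, (hh.homeomorph f).symm, (hh.homeomorph f).symm.continuous, ?_⟩
  ext1 x
  exact (hh.homeomorph f).apply_symm_apply x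
end
end

section
/- Let b ≥ 4 and let α ∈ ℝ^b be a nonzero vector. Then the hyperplane section D ∩ α^⊥ is nonempty: there exists [z] ∈ D with ⟨z, α⟩ = 0. -/
noncomputable section

open scoped BigOperators

theorem exists_three (a c d : ℝ) : ∃ u v w : ℂ, u * u + v * v + w * w = 0 ∧
    0 < u.re * u.re + u.im * u.im + (v.re * v.re + v.im * v.im) + (w.re * w.re + w.im * w.im) ∧
    u * a + v * c + w * d = 0 := by
  by_cases h : a = 0 ∧ c = 0
  · obtain ⟨rfl, rfl⟩ := h
    refine ⟨1, Complex.I, 0, ?_, ?_, ?_⟩ <;> simp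
  · have hr : 0 < a ^ 2 + c ^ 2 := by
      by_contra hn
      apply h
      constructor <;> nlinarith [sq_nonneg a, sq_nonneg c]
    obtain ⟨n, hn⟩ : ∃ n : ℝ, n ^ 2 = a ^ 2 + c ^ 2 + d ^ 2 :=
      ⟨Real.sqrt (a ^ 2 + c ^ 2 + d ^ 2), Real.sq_sqrt (by positivity)⟩
    refine ⟨⟨-c * n, -d * a⟩, ⟨a * n, -d * c⟩, ⟨0, a ^ 2 + c ^ 2⟩, ?_, ?_, ?_⟩
    · apply Complex.ext
      · simp
        linear_combination (a ^ 2 + c ^ 2) * hn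
      · simp
        ring
    · have : 0 < (a ^ 2 + c ^ 2) * (a ^ 2 + c ^ 2) := mul_pos hr hr
      dsimp only
      nlinarith [mul_self_nonneg (-c * n), mul_self_nonneg (-d * a), mul_self_nonneg (a * n),
        mul_self_nonneg (-d * c)]
    · apply Complex.ext
      · simp
        ring
      · simp
        ring

/-- for `b ≥ 4` each hyperplane section `D ∩ α^⊥` is nonempty. -/
theorem stmt15 (b : ℕ) (hb : 4 ≤ b) (α : Fin b → ℝ) (hα : α ≠ 0) :
    ∃ z : Fin b → ℂ, z ≠ 0 ∧ isPeriodVec z ∧ bC z (cplx α) = 0 := by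
  obtain ⟨k, rfl⟩ : ∃ k, b = k + 1 + 1 + 1 := ⟨b - 3, by omega⟩
  obtain ⟨u, v, w, h1, h2, h3⟩ := exists_three (α 0) (α (Fin.succ 0)) (α (Fin.succ (Fin.succ 0)))
  have key : ∀ y : Fin (k + 1 + 1 + 1) → ℂ,
      bC (Fin.cons u (Fin.cons v (Fin.cons w fun _ => 0))) y
        = u * y 0 + v * y (Fin.succ 0) + w * y (Fin.succ (Fin.succ 0)) := by
    intro y
    unfold bC
    rw [Fin.sum_univ_succ, Fin.sum_univ_succ, Fin.sum_univ_succ]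
    have e0 : eps (0 : Fin (k + 1 + 1 + 1)) = 1 := by simp [eps]
    have e1 : eps (Fin.succ 0 : Fin (k + 1 + 1 + 1)) = 1 := by
      simp only [eps, Fin.val_succ, Fin.val_zero]
      norm_num
    have e2 : eps (Fin.succ (Fin.succ 0) : Fin (k + 1 + 1 + 1)) = 1 := by
      simp only [eps, Fin.val_succ, Fin.val_zero]
      norm_num
    simp only [Fin.cons_zero, Fin.cons_succ, e0, e1, e2, mul_zero, zero_mul,
      Finset.sum_const_zero, Complex.ofReal_one]
    ring
  have hpos : 0 < (bC (Fin.cons u (Fin.cons v (Fin.cons w fun _ => 0)))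
      (conjVec (Fin.cons u (Fin.cons v (Fin.cons w fun _ => 0)) :
        Fin (k + 1 + 1 + 1) → ℂ))).re := by
    rw [key]
    simp only [conjVec, Fin.cons_zero, Fin.cons_succ]
    simp only [Complex.add_re, Complex.mul_re, Complex.conj_re, Complex.conj_im]
    linarith
  refine ⟨Fin.cons u (Fin.cons v (Fin.cons w fun _ => 0)), ?_, ⟨?_, hpos⟩, ?_⟩
  · intro h0
    rw [h0] at hpos
    simp [bC] at hpos
  · unfold qC
    rw [key]
    simpa only [Fin.cons_zero, Fin.cons_succ] using h1
  · rw [key]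
    exact h3
end
end
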